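/- Saturation lemma: let Γ be a consistent (possibly infinite) set of moded propositions and Q a moded proposition such that Γ ⊬ Q. Then there exists a prime theory Γ' ⊇ Γ such that Γ' ⊬ Q. -/

import Mathlib

/-!
Extend `Γ` by Zorn's lemma to a set `M` that is maximal among those not deriving `Q`; this is
possible because derivations use finitely many hypotheses, so a union of a chain of such sets is
again such a set. Maximality says that every `P ∉ M` satisfies `M, P ⊢ Q`. Hence, if `M ⊢ P` and
`P ∉ M`, then `M ⊢ Q` by cut (`SDeriv.cut`), so `M` is deductively closed. If `(A ∨ B)⁺ ∈ M` but
neither `A⊕` nor `B⊕` is in `M`, then `M, A⊕ ⊢ Q` and `M, B⊕ ⊢ Q`, so `M ⊢ Q` by `E∨⁺`; the case of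
`(A ∧ B)⁻` is dual. Cut is a consequence of the substitution lemma `PRK.subst`.
-/

/-- Pure propositions: A ::= α | A∧B | A∨B | ¬A -/
inductive PureProp : Type
  | var : ℕ → PureProp
  | conj : PureProp → PureProp → PureProp
  | disj : PureProp → PureProp → PureProp
  | neg : PureProp → PureProp
  deriving DecidableEq

/-- Moded propositions: A⁺ (sp), A⁻ (sn), A⊕ (cp), A⊖ (cn). -/
inductive MProp : Type
  | sp : PureProp → MProp
  | sn : PureProp → MProp
  | cp : PureProp → MProp
  | cn : PureProp → MProp
  deriving DecidableEq

/-- The opposite P~: flips the sign, keeps the strength. -/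
def MProp.opp : MProp → MProp
  | .sp A => .sn A
  | .sn A => .sp A
  | .cp A => .cn A
  | .cn A => .cp A

def MProp.isStrong : MProp → Prop
  | .sp _ => True
  | .sn _ => True
  | .cp _ => False
  | .cn _ => False

def MProp.isClassical : MProp → Prop
  | .sp _ => False
  | .sn _ => False
  | .cp _ => True
  | .cn _ => True

/-- Derivability in system PRK (natural deduction), Γ a finite set of moded propositions. -/
inductive PRK : Finset MProp → MProp → Prop
  | ax {Γ : Finset MProp} {P : MProp} : P ∈ Γ → PRK Γ P
  | abs {Γ : Finset MProp} {P Q : MProp} :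
      P.isStrong → PRK Γ P → PRK Γ P.opp → PRK Γ Q
  | iConjP {Γ A B} : PRK Γ (MProp.cp A) → PRK Γ (MProp.cp B) → PRK Γ (MProp.sp (PureProp.conj A B))
  | eConjP1 {Γ A B} : PRK Γ (MProp.sp (PureProp.conj A B)) → PRK Γ (MProp.cp A)
  | eConjP2 {Γ A B} : PRK Γ (MProp.sp (PureProp.conj A B)) → PRK Γ (MProp.cp B)
  | iDisjP1 {Γ A B} : PRK Γ (MProp.cp A) → PRK Γ (MProp.sp (PureProp.disj A B))
  | iDisjP2 {Γ A B} : PRK Γ (MProp.cp B) → PRK Γ (MProp.sp (PureProp.disj A B))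
  | eDisjP {Γ A B P} : PRK Γ (MProp.sp (PureProp.disj A B)) →
      PRK (insert (MProp.cp A) Γ) P → PRK (insert (MProp.cp B) Γ) P → PRK Γ P
  | iNegP {Γ A} : PRK Γ (MProp.cn A) → PRK Γ (MProp.sp (PureProp.neg A))
  | eNegP {Γ A} : PRK Γ (MProp.sp (PureProp.neg A)) → PRK Γ (MProp.cn A)
  | icP {Γ A} : PRK (insert (MProp.cn A) Γ) (MProp.sp A) → PRK Γ (MProp.cp A)
  | ecP {Γ A} : PRK Γ (MProp.cp A) → PRK Γ (MProp.cn A) → PRK Γ (MProp.sp A)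
  | iDisjN {Γ A B} : PRK Γ (MProp.cn A) → PRK Γ (MProp.cn B) → PRK Γ (MProp.sn (PureProp.disj A B))
  | eDisjN1 {Γ A B} : PRK Γ (MProp.sn (PureProp.disj A B)) → PRK Γ (MProp.cn A)
  | eDisjN2 {Γ A B} : PRK Γ (MProp.sn (PureProp.disj A B)) → PRK Γ (MProp.cn B)
  | iConjN1 {Γ A B} : PRK Γ (MProp.cn A) → PRK Γ (MProp.sn (PureProp.conj A B))
  | iConjN2 {Γ A B} : PRK Γ (MProp.cn B) → PRK Γ (MProp.sn (PureProp.conj A B))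
  | eConjN {Γ A B P} : PRK Γ (MProp.sn (PureProp.conj A B)) →
      PRK (insert (MProp.cn A) Γ) P → PRK (insert (MProp.cn B) Γ) P → PRK Γ P
  | iNegN {Γ A} : PRK Γ (MProp.cp A) → PRK Γ (MProp.sn (PureProp.neg A))
  | eNegN {Γ A} : PRK Γ (MProp.sn (PureProp.neg A)) → PRK Γ (MProp.cp A)
  | icN {Γ A} : PRK (insert (MProp.cp A) Γ) (MProp.sn A) → PRK Γ (MProp.cn A)
  | ecN {Γ A} : PRK Γ (MProp.cn A) → PRK Γ (MProp.cp A) → PRK Γ (MProp.sn A)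

/-- Derivability from a possibly infinite set of moded propositions. -/
def SDeriv (Γ : Set MProp) (P : MProp) : Prop :=
  ∃ Δ : Finset MProp, ↑Δ ⊆ Γ ∧ PRK Δ P

/-- Consistency of a possibly infinite set of moded propositions. -/
def SetConsistent (Γ : Set MProp) : Prop := ∃ P, ¬ SDeriv Γ P

/-- A prime theory: closed by deduction, consistent, and disjunctive. -/
def PrimeTheory (Γ : Set MProp) : Prop :=
  (∀ P, SDeriv Γ P → P ∈ Γ) ∧
  SetConsistent Γ ∧
  (∀ A B, MProp.sp (PureProp.disj A B) ∈ Γ → MProp.cp A ∈ Γ ∨ MProp.cp B ∈ Γ) ∧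
  (∀ A B, MProp.sn (PureProp.conj A B) ∈ Γ → MProp.cn A ∈ Γ ∨ MProp.cn B ∈ Γ)

theorem PRK.weaken {Γ : Finset MProp} {Q : MProp} (h : PRK Γ Q) :
    ∀ {Δ : Finset MProp}, Γ ⊆ Δ → PRK Δ Q := by
  induction h with
  | ax h => exact fun hs => .ax (hs h)
  | abs hP _ _ ih1 ih2 => exact fun hs => .abs hP (ih1 hs) (ih2 hs)
  | iConjP _ _ ih1 ih2 => exact fun hs => .iConjP (ih1 hs) (ih2 hs)
  | eConjP1 _ ih => exact fun hs => .eConjP1 (ih hs)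
  | eConjP2 _ ih => exact fun hs => .eConjP2 (ih hs)
  | iDisjP1 _ ih => exact fun hs => .iDisjP1 (ih hs)
  | iDisjP2 _ ih => exact fun hs => .iDisjP2 (ih hs)
  | eDisjP _ _ _ ih ih1 ih2 =>
    exact fun hs => .eDisjP (ih hs) (ih1 (Finset.insert_subset_insert _ hs))
      (ih2 (Finset.insert_subset_insert _ hs))
  | iNegP _ ih => exact fun hs => .iNegP (ih hs)
  | eNegP _ ih => exact fun hs => .eNegP (ih hs)
  | icP _ ih => exact fun hs => .icP (ih (Finset.insert_subset_insert _ hs))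
  | ecP _ _ ih1 ih2 => exact fun hs => .ecP (ih1 hs) (ih2 hs)
  | iDisjN _ _ ih1 ih2 => exact fun hs => .iDisjN (ih1 hs) (ih2 hs)
  | eDisjN1 _ ih => exact fun hs => .eDisjN1 (ih hs)
  | eDisjN2 _ ih => exact fun hs => .eDisjN2 (ih hs)
  | iConjN1 _ ih => exact fun hs => .iConjN1 (ih hs)
  | iConjN2 _ ih => exact fun hs => .iConjN2 (ih hs)
  | eConjN _ _ _ ih ih1 ih2 =>
    exact fun hs => .eConjN (ih hs) (ih1 (Finset.insert_subset_insert _ hs))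
      (ih2 (Finset.insert_subset_insert _ hs))
  | iNegN _ ih => exact fun hs => .iNegN (ih hs)
  | eNegN _ ih => exact fun hs => .eNegN (ih hs)
  | icN _ ih => exact fun hs => .icN (ih (Finset.insert_subset_insert _ hs))
  | ecN _ _ ih1 ih2 => exact fun hs => .ecN (ih1 hs) (ih2 hs)

/-- Lifts a family of derivations under a binder: if `Δ` derives all of `Γ`, then `Δ, X` derives
all of `Γ, X`. -/
theorem PRK.lift_insert {Γ Δ : Finset MProp} (X : MProp) (h : ∀ P ∈ Γ, PRK Δ P) :
    ∀ P ∈ insert X Γ, PRK (insert X Δ) P := by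
  intro P hP
  rcases Finset.mem_insert.1 hP with rfl | hP
  · exact .ax (Finset.mem_insert_self _ _)
  · exact (h P hP).weaken (Finset.subset_insert _ _)

/-- Simultaneous substitution of derivations for hypotheses. -/
theorem PRK.subst {Γ : Finset MProp} {Q : MProp} (h : PRK Γ Q) :
    ∀ {Δ : Finset MProp}, (∀ P ∈ Γ, PRK Δ P) → PRK Δ Q := by
  induction h with
  | ax h => exact fun hs => hs _ h
  | abs hP _ _ ih1 ih2 => exact fun hs => .abs hP (ih1 hs) (ih2 hs)
  | iConjP _ _ ih1 ih2 => exact fun hs => .iConjP (ih1 hs) (ih2 hs)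
  | eConjP1 _ ih => exact fun hs => .eConjP1 (ih hs)
  | eConjP2 _ ih => exact fun hs => .eConjP2 (ih hs)
  | iDisjP1 _ ih => exact fun hs => .iDisjP1 (ih hs)
  | iDisjP2 _ ih => exact fun hs => .iDisjP2 (ih hs)
  | eDisjP _ _ _ ih ih1 ih2 =>
    exact fun hs => .eDisjP (ih hs) (ih1 (PRK.lift_insert _ hs)) (ih2 (PRK.lift_insert _ hs))
  | iNegP _ ih => exact fun hs => .iNegP (ih hs)
  | eNegP _ ih => exact fun hs => .eNegP (ih hs)
  | icP _ ih => exact fun hs => .icP (ih (PRK.lift_insert _ hs))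
  | ecP _ _ ih1 ih2 => exact fun hs => .ecP (ih1 hs) (ih2 hs)
  | iDisjN _ _ ih1 ih2 => exact fun hs => .iDisjN (ih1 hs) (ih2 hs)
  | eDisjN1 _ ih => exact fun hs => .eDisjN1 (ih hs)
  | eDisjN2 _ ih => exact fun hs => .eDisjN2 (ih hs)
  | iConjN1 _ ih => exact fun hs => .iConjN1 (ih hs)
  | iConjN2 _ ih => exact fun hs => .iConjN2 (ih hs)
  | eConjN _ _ _ ih ih1 ih2 =>
    exact fun hs => .eConjN (ih hs) (ih1 (PRK.lift_insert _ hs)) (ih2 (PRK.lift_insert _ hs))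
  | iNegN _ ih => exact fun hs => .iNegN (ih hs)
  | eNegN _ ih => exact fun hs => .eNegN (ih hs)
  | icN _ ih => exact fun hs => .icN (ih (PRK.lift_insert _ hs))
  | ecN _ _ ih1 ih2 => exact fun hs => .ecN (ih1 hs) (ih2 hs)

/-- A derivation from `Γ, P` uses, besides possibly `P`, only finitely many members of `Γ`. -/
theorem SDeriv.of_insert {Γ : Set MProp} {P Q : MProp} (h : SDeriv (insert P Γ) Q) :
    ∃ Δ : Finset MProp, ↑Δ ⊆ Γ ∧ PRK (insert P Δ) Q := by
  obtain ⟨Δ, hΔ, hd⟩ := h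
  refine ⟨Δ.erase P, fun X hX => ?_, hd.weaken (Finset.insert_erase_subset P Δ)⟩
  obtain ⟨hne, hX⟩ := Finset.mem_erase.1 (Finset.mem_coe.1 hX)
  exact (hΔ hX).resolve_left hne

theorem SDeriv.cut {Γ : Set MProp} {P Q : MProp} (hP : SDeriv Γ P)
    (hQ : SDeriv (insert P Γ) Q) : SDeriv Γ Q := by
  obtain ⟨Δ₁, h₁, d₁⟩ := hP
  obtain ⟨Δ₂, h₂, d₂⟩ := hQ.of_insert
  refine ⟨Δ₁ ∪ Δ₂, by simp [h₁, h₂], d₂.subst fun X hX => ?_⟩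
  rcases Finset.mem_insert.1 hX with rfl | hX
  · exact d₁.weaken Finset.subset_union_left
  · exact .ax (Finset.mem_union_right _ hX)

theorem SDeriv.eDisjP {Γ : Set MProp} {A B : PureProp} {Q : MProp}
    (h : MProp.sp (PureProp.disj A B) ∈ Γ) (hA : SDeriv (insert (MProp.cp A) Γ) Q)
    (hB : SDeriv (insert (MProp.cp B) Γ) Q) : SDeriv Γ Q := by
  obtain ⟨Δ₁, h₁, d₁⟩ := hA.of_insert
  obtain ⟨Δ₂, h₂, d₂⟩ := hB.of_insert
  refine ⟨insert (MProp.sp (PureProp.disj A B)) (Δ₁ ∪ Δ₂), by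
    simp [Set.insert_subset_iff, h, h₁, h₂], .eDisjP (.ax (Finset.mem_insert_self _ _))
      (d₁.weaken ?_) (d₂.weaken ?_)⟩
  · exact Finset.insert_subset_insert _ (Finset.subset_union_left.trans (Finset.subset_insert _ _))
  · exact Finset.insert_subset_insert _ (Finset.subset_union_right.trans (Finset.subset_insert _ _))

theorem SDeriv.eConjN {Γ : Set MProp} {A B : PureProp} {Q : MProp}
    (h : MProp.sn (PureProp.conj A B) ∈ Γ) (hA : SDeriv (insert (MProp.cn A) Γ) Q)
    (hB : SDeriv (insert (MProp.cn B) Γ) Q) : SDeriv Γ Q := by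
  obtain ⟨Δ₁, h₁, d₁⟩ := hA.of_insert
  obtain ⟨Δ₂, h₂, d₂⟩ := hB.of_insert
  refine ⟨insert (MProp.sn (PureProp.conj A B)) (Δ₁ ∪ Δ₂), by
    simp [Set.insert_subset_iff, h, h₁, h₂], .eConjN (.ax (Finset.mem_insert_self _ _))
      (d₁.weaken ?_) (d₂.weaken ?_)⟩
  · exact Finset.insert_subset_insert _ (Finset.subset_union_left.trans (Finset.subset_insert _ _))
  · exact Finset.insert_subset_insert _ (Finset.subset_union_right.trans (Finset.subset_insert _ _))

/-- Saturation lemma: any consistent Γ with Γ ⊬ Q extends to a prime theory Γ' with Γ' ⊬ Q. -/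
theorem saturation (Γ : Set MProp) (Q : MProp)
    (hc : SetConsistent Γ) (hnd : ¬ SDeriv Γ Q) :
    ∃ Γ' : Set MProp, Γ ⊆ Γ' ∧ PrimeTheory Γ' ∧ ¬ SDeriv Γ' Q := by
  obtain ⟨M, hΓM, hM⟩ := zorn_subset_nonempty {S : Set MProp | ¬ SDeriv S Q} (by
    intro c hc hchain hne
    refine ⟨⋃₀ c, ?_, fun s hs => Set.subset_sUnion_of_mem hs⟩
    -- A finite subset of the union of a nonempty chain lies in a single member of the chain.
    rintro ⟨Δ, hΔ, hd⟩
    obtain ⟨S, hS, hΔS⟩ := DirectedOn.exists_mem_subset_of_finset_subset_biUnion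
      (f := id) hne hchain.directedOn (by simpa [Set.sUnion_eq_biUnion] using hΔ)
    exact hc hS ⟨Δ, hΔS, hd⟩) Γ hnd
  have hMQ : ¬ SDeriv M Q := hM.prop
  have hmax : ∀ P, P ∉ M → SDeriv (insert P M) Q := by
    intro P hP
    by_contra hn
    exact hP (hM.le_of_ge hn (Set.subset_insert P M) (Set.mem_insert P M))
  refine ⟨M, hΓM, ⟨fun P hd => ?_, ⟨Q, hMQ⟩, fun A B h => ?_, fun A B h => ?_⟩, hMQ⟩
  · by_contra hP
    exact hMQ (hd.cut (hmax P hP))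
  · by_contra! hn
    exact hMQ (.eDisjP h (hmax _ hn.1) (hmax _ hn.2))
  · by_contra! hn
    exact hMQ (.eConjN h (hmax _ hn.1) (hmax _ hn.2))
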